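/- Let X_1, ..., X_m ∈ ℝ^d be vectors, λ > 0, and G = Σ_{ℓ=1}^m X_ℓ X_ℓᵀ + λ I_d, with smallest eigenvalue λ_min(G) ≥ λ > 0. Then for every x ∈ ℝ^d, Σ_{ℓ=1}^m (xᵀ G⁻¹ X_ℓ)² ≥ (1 − λ / λ_min(G)) · xᵀ G⁻¹ x. -/

import Mathlib

open Matrix BigOperators

/-!
Write `G = S + λ`, with `S` the sum of the outer products, and let `c > 0` be a lower bound for the
eigenvalues of `G`. The sum of squares is the quadratic form of `G⁻¹ S G⁻¹ = G⁻¹ - λ G⁻²`, and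
conjugating `c ≤ G` by `G⁻¹` gives `c G⁻² ≤ G⁻¹` in the Loewner order. Hence
`G⁻¹ S G⁻¹ ≥ (1 - λ / c) G⁻¹`.
-/

section StarOrderedAlgebra

variable {k A : Type*} [Ring A] [PartialOrder A] [StarRing A] [StarOrderedRing A]

theorem smul_mul_self_le_of_algebraMap_le [CommSemiring k] [Algebra k A] {a b : A} {c : k}
    (hb : IsSelfAdjoint b) (hba : b * a = 1) (hca : algebraMap k A c ≤ a) :
    c • (b * b) ≤ b := by
  simpa only [← Algebra.commutes, ← Algebra.smul_def, smul_mul_assoc, hba, one_mul] using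
    hb.conjugate_le_conjugate hca

theorem one_sub_div_smul_le_conjugate_sub_algebraMap [Field k] [LinearOrder k]
    [IsStrictOrderedRing k] [Algebra k A] [PosSMulMono k A] {a b : A} {r c : k}
    (hb : IsSelfAdjoint b) (hba : b * a = 1) (hr : 0 ≤ r) (hc : 0 < c)
    (hca : algebraMap k A c ≤ a) :
    (1 - r / c) • b ≤ b * (a - algebraMap k A r) * b := by
  have h_le : r • (b * b) ≤ (r / c) • b := by
    simpa only [smul_smul, div_mul_cancel₀ r hc.ne'] using
      smul_le_smul_of_nonneg_left (smul_mul_self_le_of_algebraMap_le hb hba hca)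
        (div_nonneg hr hc.le)
  calc (1 - r / c) • b = b - (r / c) • b := by rw [sub_smul, one_smul]
    _ ≤ b - r • (b * b) := sub_le_sub_left h_le b
    _ = b * (a - algebraMap k A r) * b := by
      rw [mul_sub, hba, sub_mul, one_mul, ← Algebra.commutes, ← Algebra.smul_def, smul_mul_assoc]

end StarOrderedAlgebra

section Matrix

open scoped ComplexOrder MatrixOrder

variable {ι l n 𝕜 : Type*} [Fintype ι] [Fintype l] [Fintype n] [RCLike 𝕜]

theorem algebraMap_le_iff_le_eigenvalues [DecidableEq n] {G : Matrix n n 𝕜} (hG : G.IsHermitian)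
    {c : ℝ} : algebraMap ℝ (Matrix n n 𝕜) c ≤ G ↔ ∀ i, c ≤ hG.eigenvalues i := by
  rw [algebraMap_le_iff_le_spectrum hG, hG.spectrum_real_eq_range_eigenvalues,
    Set.forall_mem_range]

theorem re_dotProduct_mulVec_mono {M N : Matrix n n 𝕜} (hMN : M ≤ N) (x : n → 𝕜) :
    RCLike.re (star x ⬝ᵥ M *ᵥ x) ≤ RCLike.re (star x ⬝ᵥ N *ᵥ x) := by
  simpa only [sub_mulVec, dotProduct_sub, map_sub, sub_nonneg] using
    (Matrix.le_iff.mp hMN).re_dotProduct_nonneg x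

theorem dotProduct_vecMulVec_star_mulVec (x v : n → 𝕜) :
    star x ⬝ᵥ vecMulVec v (star v) *ᵥ x = (‖star x ⬝ᵥ v‖ ^ 2 : ℝ) := by
  rw [vecMulVec_mulVec, dotProduct_smul, op_smul_eq_mul, star_dotProduct v x, RCLike.star_def,
    RCLike.mul_conj, RCLike.ofReal_pow]

theorem dotProduct_conjugate_sum_vecMulVec_mulVec (B : Matrix l n 𝕜) (X : ι → n → 𝕜) (x : l → 𝕜) :
    star x ⬝ᵥ (B * (∑ i, vecMulVec (X i) (star (X i))) * Bᴴ) *ᵥ x =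
      (∑ i, ‖star x ⬝ᵥ B *ᵥ X i‖ ^ 2 : ℝ) := by
  simp only [Matrix.mul_sum, Matrix.sum_mul, mul_vecMulVec, vecMulVec_mul, ← star_mulVec,
    sum_mulVec, dotProduct_sum, dotProduct_vecMulVec_star_mulVec, RCLike.ofReal_sum]

theorem stmt_4_general [DecidableEq n] (X : ι → n → 𝕜) {lam : ℝ} (hlam : 0 ≤ lam)
    {G : Matrix n n 𝕜}
    (hG : G = (∑ i, vecMulVec (X i) (star (X i))) + lam • (1 : Matrix n n 𝕜))
    (hGherm : G.IsHermitian) {c : ℝ} (hc : 0 < c) (hlb : ∀ i, c ≤ hGherm.eigenvalues i)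
    (x : n → 𝕜) :
    (1 - lam / c) * RCLike.re (star x ⬝ᵥ G⁻¹ *ᵥ x) ≤ ∑ i, ‖star x ⬝ᵥ G⁻¹ *ᵥ X i‖ ^ 2 := by
  have hpos : G.PosDef := hGherm.posDef_iff_eigenvalues_pos.mpr fun i => hc.trans_le (hlb i)
  have hinv : G⁻¹ * G = 1 := nonsing_inv_mul G ((isUnit_iff_isUnit_det G).mp hpos.isUnit)
  have hsum : G - algebraMap ℝ _ lam = ∑ i, vecMulVec (X i) (star (X i)) := by
    rw [hG, Algebra.algebraMap_eq_smul_one, add_sub_cancel_right]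
  have hloewner : (1 - lam / c) • G⁻¹ ≤
      G⁻¹ * (∑ i, vecMulVec (X i) (star (X i))) * (G⁻¹)ᴴ := by
    rw [hGherm.inv.eq, ← hsum]
    exact one_sub_div_smul_le_conjugate_sub_algebraMap hGherm.inv hinv hlam hc
      ((algebraMap_le_iff_le_eigenvalues hGherm).mpr hlb)
  simpa only [dotProduct_conjugate_sum_vecMulVec_mulVec, RCLike.ofReal_re, smul_mulVec,
    dotProduct_smul, RCLike.smul_re] using re_dotProduct_mulVec_mono hloewner x

end Matrix

/-- Let `X_1, ..., X_m ∈ ℝ^d`, `λ > 0`, and `G = Σ_ℓ X_ℓ X_ℓᵀ + λ I_d`, with smallest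
eigenvalue `λ_min(G) ≥ λ > 0`. Then for every `x ∈ ℝ^d`,
`Σ_ℓ (xᵀ G⁻¹ X_ℓ)² ≥ (1 − λ/λ_min(G)) · xᵀ G⁻¹ x`. -/
theorem stmt_4 {d m : ℕ} (X : Fin m → Fin d → ℝ) (lam : ℝ) (hlam : 0 < lam)
    (G : Matrix (Fin d) (Fin d) ℝ)
    (hG : G = (∑ ℓ : Fin m, Matrix.vecMulVec (X ℓ) (X ℓ)) + lam • (1 : Matrix (Fin d) (Fin d) ℝ))
    (hGherm : G.IsHermitian) (lmin : ℝ)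
    (hlb : ∀ i : Fin d, lmin ≤ hGherm.eigenvalues i)
    (hmem : ∃ i : Fin d, hGherm.eigenvalues i = lmin)
    (hmin : lam ≤ lmin)
    (x : Fin d → ℝ) :
    (1 - lam / lmin) * (x ⬝ᵥ G⁻¹.mulVec x)
      ≤ ∑ ℓ : Fin m, (x ⬝ᵥ G⁻¹.mulVec (X ℓ)) ^ 2 := by
  simpa only [star_trivial, RCLike.re_to_real, Real.norm_eq_abs, sq_abs] using
    stmt_4_general X hlam.le hG hGherm (hlam.trans_le hmin) hlb x
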